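/- (Relation between energies in fixed and moving frames.) Let K_t(q) be a smooth family of symmetric bilinear forms on ℝⁿ, Δ_t(q) a smooth family of linear forms, V(q,t) a smooth potential, and L(q,q̇,t) = ½K_t(q̇,q̇) + Δ_t(q̇) − V(q,t), with energy E_L(q,q̇,t) = ½K_t(q̇,q̇) + V(q,t). Let g be a moving reference frame and define on the moving frame: κ_t(ξ,η)|_x := K_t(Dg_t ξ, Dg_t η)|_{g_t(x)}, δ_t(ξ)|_x := Δ_t(Dg_t ξ) + K_t(ω_t, Dg_t ξ)|_{g_t(x)}, v(x,t) := V(g_t(x),t) − ½K_t(ω_t,ω_t)|_{g_t(x)} − Δ_t(ω_t)|_{g_t(x)}, E_l(x,ẋ,t) := ½κ_t(ẋ,ẋ) + v(x,t), and the fiber derivative 𝔽l(x,ẋ,t)(ξ) := κ_t(ẋ,ξ) + δ_t(ξ). Then for all (x,ẋ,t): E_L(q,q̇,t) evaluated at q = g_t(x), q̇ = Dg_t(ẋ) + ω_t(g_t(x)) equals E_l(x,ẋ,t) + 𝔽l(x,ẋ,t)(Ω_t(x)). -/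

import Mathlib

open scoped ContDiff

/-- Angular velocity in the fixed frame. -/
noncomputable def omegaFixed {n : ℕ} (g ginv : ℝ → (Fin n → ℝ) → (Fin n → ℝ))
    (t : ℝ) (q : Fin n → ℝ) : Fin n → ℝ :=
  deriv (fun s => g (t + s) (ginv t q)) 0

/-- Angular velocity in the moving frame. -/
noncomputable def omegaMoving {n : ℕ} (g ginv : ℝ → (Fin n → ℝ) → (Fin n → ℝ))
    (t : ℝ) (x : Fin n → ℝ) : Fin n → ℝ :=
  deriv (fun s => ginv t (g (t + s) x)) 0

section

variable {n : ℕ} (K : ℝ → (Fin n → ℝ) → ((Fin n → ℝ) →L[ℝ] (Fin n → ℝ) →L[ℝ] ℝ))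
  (Δ : ℝ → (Fin n → ℝ) → ((Fin n → ℝ) →L[ℝ] ℝ)) (V : (Fin n → ℝ) → ℝ → ℝ)
  (g ginv : ℝ → (Fin n → ℝ) → (Fin n → ℝ))

/-- The energy of the natural mechanical system in the fixed frame:
`E_L(q,q̇,t) = ½K_t(q̇,q̇) + V(q,t)`. -/
noncomputable def energyFixed (q v : Fin n → ℝ) (t : ℝ) : ℝ :=
  (1 / 2) * K t q v v + V q t

/-- Kinetic metric in the moving frame: `κ_t(ξ,η)|_x = K_t(Dg_t ξ, Dg_t η)|_{g_t(x)}`. -/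
noncomputable def kappaMoving (t : ℝ) (x ξ η : Fin n → ℝ) : ℝ :=
  K t (g t x) (fderiv ℝ (g t) x ξ) (fderiv ℝ (g t) x η)

/-- Linear term in the moving frame:
`δ_t(ξ)|_x = Δ_t(Dg_t ξ) + K_t(ω_t, Dg_t ξ)|_{g_t(x)}`. -/
noncomputable def deltaMoving (t : ℝ) (x ξ : Fin n → ℝ) : ℝ :=
  Δ t (g t x) (fderiv ℝ (g t) x ξ)
    + K t (g t x) (omegaFixed g ginv t (g t x)) (fderiv ℝ (g t) x ξ)

/-- Potential in the moving frame:
`v(x,t) = V(g_t(x),t) − ½K_t(ω_t,ω_t) − Δ_t(ω_t)`, evaluated at `g_t(x)`. -/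
noncomputable def potentialMoving (x : Fin n → ℝ) (t : ℝ) : ℝ :=
  V (g t x) t
    - (1 / 2) * K t (g t x) (omegaFixed g ginv t (g t x)) (omegaFixed g ginv t (g t x))
    - Δ t (g t x) (omegaFixed g ginv t (g t x))

/-- Energy in the moving frame: `E_l(x,ẋ,t) = ½κ_t(ẋ,ẋ) + v(x,t)`. -/
noncomputable def energyMoving (x v : Fin n → ℝ) (t : ℝ) : ℝ :=
  (1 / 2) * kappaMoving K g t x v v + potentialMoving K Δ V g ginv x t

/-- Fiber derivative of the Lagrangian in the moving frame:
`𝔽l(x,ẋ,t)(ξ) = κ_t(ẋ,ξ) + δ_t(ξ)`. -/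
noncomputable def fiberDerMoving (x v : Fin n → ℝ) (t : ℝ) (ξ : Fin n → ℝ) : ℝ :=
  kappaMoving K g t x v ξ + deltaMoving K Δ g ginv t x ξ

/-!
For any Lagrangian `L`, the energy is `E_L = 𝔽L(q̇)(q̇) - L`. In the moving frame the Lagrangian is
`l(ẋ) = L(Dg ẋ + ω)`, so `𝔽l(ẋ) = 𝔽L(q̇) ∘ Dg` with `q̇ = Dg ẋ + ω`. Since `ω = Dg Ω`, the fixed
velocity is `q̇ = Dg (ẋ + Ω)`, whence `E_L = 𝔽l(ẋ)(ẋ + Ω) - l(ẋ) = E_l + 𝔽l(ẋ)(Ω)`.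
For `L = ½K + Δ - V`, the energies and the fiber derivative of `L` and `l` are the given ones.
-/

theorem fderiv_deriv_eq_deriv_of_rightInverse {𝕜 E F : Type*} [NontriviallyNormedField 𝕜]
    [NormedAddCommGroup E] [NormedSpace 𝕜 E] [NormedAddCommGroup F] [NormedSpace 𝕜 F]
    {f : E → F} {finv : F → E} {γ : 𝕜 → F} {t : 𝕜}
    (hf : DifferentiableAt 𝕜 f (finv (γ t))) (hγ : DifferentiableAt 𝕜 (fun s => finv (γ s)) t)
    (hright : Function.RightInverse finv f) :
    fderiv 𝕜 f (finv (γ t)) (deriv (fun s => finv (γ s)) t) = deriv γ t := by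
  rw [← fderiv_comp_deriv t hf hγ]
  exact congrArg (deriv · t) (funext fun s => hright (γ s))

section Lagrangian

variable {E F : Type*} [NormedAddCommGroup E] [NormedSpace ℝ E]
  [NormedAddCommGroup F] [NormedSpace ℝ F]

/-- The fiber derivative (Legendre map) `𝔽L(q,q̇,t)` of a Lagrangian `L`, i.e. its momentum. -/
noncomputable def fiberDeriv (L : E → E → ℝ → ℝ) (q v : E) (t : ℝ) : E →L[ℝ] ℝ :=
  fderiv ℝ (fun w => L q w t) v

/-- The energy `𝔽L(q,q̇,t)(q̇) - L(q,q̇,t)` of a Lagrangian `L`. -/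
noncomputable def lagrangianEnergy (L : E → E → ℝ → ℝ) (q v : E) (t : ℝ) : ℝ :=
  fiberDeriv L q v t v - L q v t

/-- The velocity `d/dt φ_t(x(t))` in the fixed frame of a motion with position `x` and velocity `v`
in the moving frame `φ`. Its second term is `ω_t(φ_t(x))`, written without the inverse of `φ_t`. -/
noncomputable def fixedVelocity (φ : ℝ → E → F) (x v : E) (t : ℝ) : F :=
  fderiv ℝ (φ t) x v + deriv (fun s => φ s x) t

/-- The Lagrangian `l` on the moving frame `φ`: the Lagrangian `L` on the fixed frame, evaluated on
the motion as it is seen from the fixed frame. -/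
noncomputable def movingLagrangian (φ : ℝ → E → F) (L : F → F → ℝ → ℝ) (x v : E) (t : ℝ) : ℝ :=
  L (φ t x) (fixedVelocity φ x v t) t

/-- The Lagrangian `½K_t(q̇,q̇) + Δ_t(q̇) - V(q,t)` of a natural mechanical system with gyroscopic
term `Δ`. -/
noncomputable def naturalLagrangian (K : ℝ → E → E →L[ℝ] E →L[ℝ] ℝ) (Δ : ℝ → E → E →L[ℝ] ℝ)
    (V : E → ℝ → ℝ) (q v : E) (t : ℝ) : ℝ :=
  (1 / 2) * K t q v v + Δ t q v - V q t

theorem fiberDeriv_movingLagrangian_apply {φ : ℝ → E → F} {L : F → F → ℝ → ℝ} {x v : E} {t : ℝ}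
    (hL : DifferentiableAt ℝ (fun w => L (φ t x) w t) (fixedVelocity φ x v t)) (ξ : E) :
    fiberDeriv (movingLagrangian φ L) x v t ξ =
      fiberDeriv L (φ t x) (fixedVelocity φ x v t) t (fderiv ℝ (φ t) x ξ) := by
  have hvel : HasFDerivAt (fun u => fixedVelocity φ x u t) (fderiv ℝ (φ t) x) v :=
    (fderiv ℝ (φ t) x).hasFDerivAt.add_const _
  exact DFunLike.congr_fun (hL.hasFDerivAt.comp v hvel).fderiv ξ

theorem energy_fixed_eq_energy_moving_add_fiberDer_general
    {L : F → F → ℝ → ℝ} {φ : ℝ → E → F} {ψ : F → E} {x v : E} {t : ℝ}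
    (hL : DifferentiableAt ℝ (fun w => L (φ t x) w t) (fixedVelocity φ x v t))
    (hφ : DifferentiableAt ℝ (φ t) x) (hψ : DifferentiableAt ℝ (fun s => ψ (φ s x)) t)
    (hleft : ψ (φ t x) = x) (hright : Function.RightInverse ψ (φ t)) :
    lagrangianEnergy L (φ t x) (fixedVelocity φ x v t) t =
      lagrangianEnergy (movingLagrangian φ L) x v t +
        fiberDeriv (movingLagrangian φ L) x v t (deriv (fun s => ψ (φ s x)) t) := by
  have hω : fderiv ℝ (φ t) x (deriv (fun s => ψ (φ s x)) t) = deriv (fun s => φ s x) t := by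
    simpa only [hleft] using
      fderiv_deriv_eq_deriv_of_rightInverse (γ := fun s => φ s x) (by rwa [hleft]) hψ hright
  set p := fiberDeriv L (φ t x) (fixedVelocity φ x v t) t
  calc lagrangianEnergy L (φ t x) (fixedVelocity φ x v t) t
      = p (fderiv ℝ (φ t) x v + deriv (fun s => φ s x) t) - movingLagrangian φ L x v t := rfl
    _ = p (fderiv ℝ (φ t) x v) - movingLagrangian φ L x v t
          + p (fderiv ℝ (φ t) x (deriv (fun s => ψ (φ s x)) t)) := by
        rw [map_add, hω, add_sub_right_comm]
    _ = _ := by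
        rw [lagrangianEnergy, fiberDeriv_movingLagrangian_apply hL,
          fiberDeriv_movingLagrangian_apply hL]

theorem hasFDerivAt_naturalLagrangian {K : ℝ → E → E →L[ℝ] E →L[ℝ] ℝ} {Δ : ℝ → E → E →L[ℝ] ℝ}
    {V : E → ℝ → ℝ} {q : E} {t : ℝ} (hK : ∀ v w, K t q v w = K t q w v) (v : E) :
    HasFDerivAt (fun w => naturalLagrangian K Δ V q w t) (K t q v + Δ t q) v := by
  have hquad : HasFDerivAt (fun w => (1 / 2) * K t q w w) (K t q v) v := by
    refine (((K t q).hasFDerivAt.clm_apply (hasFDerivAt_id v)).const_mul (1 / 2)).congr_fderiv ?_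
    ext w
    simp only [ContinuousLinearMap.comp_id, id_eq, smul_add, add_apply, smul_apply, smul_eq_mul,
      ContinuousLinearMap.flip_apply, hK w v]
    ring
  exact (hquad.add (Δ t q).hasFDerivAt).sub_const _

end Lagrangian

section MovingFrame

variable {K Δ V g ginv} {t : ℝ}

theorem omegaFixed_apply {x : Fin n → ℝ} (hleft : ginv t (g t x) = x) :
    omegaFixed g ginv t (g t x) = deriv (fun s => g s x) t := by
  rw [omegaFixed, hleft, deriv_comp_const_add (fun s => g s x), add_zero]

theorem omegaMoving_eq_deriv (x : Fin n → ℝ) :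
    omegaMoving g ginv t x = deriv (fun s => ginv t (g s x)) t := by
  rw [omegaMoving, deriv_comp_const_add (fun s => ginv t (g s x)), add_zero]

theorem energyFixed_eq_lagrangianEnergy {q : Fin n → ℝ} (hK : ∀ v w, K t q v w = K t q w v)
    (v : Fin n → ℝ) :
    energyFixed K V q v t = lagrangianEnergy (naturalLagrangian K Δ V) q v t := by
  rw [lagrangianEnergy, fiberDeriv, (hasFDerivAt_naturalLagrangian hK v).fderiv, energyFixed,
    naturalLagrangian, add_apply]
  ring

theorem fiberDerMoving_eq_fiberDeriv {x : Fin n → ℝ}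
    (hK : ∀ v w, K t (g t x) v w = K t (g t x) w v) (hleft : ginv t (g t x) = x)
    (v ξ : Fin n → ℝ) :
    fiberDerMoving K Δ g ginv x v t ξ =
      fiberDeriv (movingLagrangian g (naturalLagrangian K Δ V)) x v t ξ := by
  have hL := hasFDerivAt_naturalLagrangian (Δ := Δ) (V := V) hK (fixedVelocity g x v t)
  rw [fiberDeriv_movingLagrangian_apply hL.differentiableAt, fiberDeriv, hL.fderiv,
    fiberDerMoving, kappaMoving, deltaMoving, omegaFixed_apply hleft, fixedVelocity]
  simp only [map_add, add_apply]
  ring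

theorem energyMoving_eq_lagrangianEnergy {x : Fin n → ℝ}
    (hK : ∀ v w, K t (g t x) v w = K t (g t x) w v) (hleft : ginv t (g t x) = x)
    (v : Fin n → ℝ) :
    energyMoving K Δ V g ginv x v t =
      lagrangianEnergy (movingLagrangian g (naturalLagrangian K Δ V)) x v t := by
  rw [lagrangianEnergy, ← fiberDerMoving_eq_fiberDeriv hK hleft, energyMoving, fiberDerMoving,
    potentialMoving, deltaMoving, kappaMoving, omegaFixed_apply hleft, movingLagrangian,
    naturalLagrangian, fixedVelocity]
  simp only [map_add, add_apply]
  rw [hK (deriv (fun s => g s x) t) (fderiv ℝ (g t) x v)]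
  ring

end MovingFrame

/-- Relation between the energies in the fixed and in the moving frame:
`E_L(g_t(x), Dg_t(ẋ) + ω_t(g_t(x)), t) = E_l(x,ẋ,t) + 𝔽l(x,ẋ,t)(Ω_t(x))`. -/
theorem energy_fixed_eq_energy_moving_add_fiberDer
    (hK : ContDiff ℝ ∞ (fun p : ℝ × (Fin n → ℝ) => K p.1 p.2))
    (hΔ : ContDiff ℝ ∞ (fun p : ℝ × (Fin n → ℝ) => Δ p.1 p.2))
    (hV : ContDiff ℝ ∞ (fun p : (Fin n → ℝ) × ℝ => V p.1 p.2))
    (hKsymm : ∀ t q v w, K t q v w = K t q w v)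
    (hg : ContDiff ℝ ∞ (fun p : ℝ × (Fin n → ℝ) => g p.1 p.2))
    (hginv : ContDiff ℝ ∞ (fun p : ℝ × (Fin n → ℝ) => ginv p.1 p.2))
    (hleft : ∀ t x, ginv t (g t x) = x)
    (hright : ∀ t q, g t (ginv t q) = q)
    (x v : Fin n → ℝ) (t : ℝ) :
    energyFixed K V (g t x) (fderiv ℝ (g t) x v + omegaFixed g ginv t (g t x)) t
      = energyMoving K Δ V g ginv x v t
        + fiberDerMoving K Δ g ginv x v t (omegaMoving g ginv t x) := by
  have hg' : Differentiable ℝ (fun p : ℝ × (Fin n → ℝ) => g p.1 p.2) :=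
    hg.differentiable (by simp)
  have hginv' : Differentiable ℝ (fun p : ℝ × (Fin n → ℝ) => ginv p.1 p.2) :=
    hginv.differentiable (by simp)
  have hK' := hKsymm t (g t x)
  have hφ : DifferentiableAt ℝ (g t) x := hg'.comp (f := fun y => (t, y)) (by fun_prop) x
  have hψ : DifferentiableAt ℝ (fun s => ginv t (g s x)) t :=
    hginv'.comp (f := fun s => (t, g s x))
      ((differentiable_const t).prodMk (hg'.comp (f := fun s => (s, x)) (by fun_prop))) t
  rw [omegaFixed_apply (hleft t x), omegaMoving_eq_deriv,
    energyFixed_eq_lagrangianEnergy (Δ := Δ) hK',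
    energyMoving_eq_lagrangianEnergy hK' (hleft t x),
    fiberDerMoving_eq_fiberDeriv (V := V) hK' (hleft t x)]
  exact energy_fixed_eq_energy_moving_add_fiberDer_general
    (hasFDerivAt_naturalLagrangian hK' _).differentiableAt hφ hψ (hleft t x) (hright t)

end
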